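/- arXiv:2004.13774 — 4 statements merged into one kernel-verified Lean document; each statement's English description precedes it below -/
import Mathlib

section
/- Let q be a prime power and let 4 ≤ h ≤ k be integers. Then the cardinality of D_1 = { (x_1, …, x_k) ∈ 𝔽_q^k \ {0} : (x_1 + ⋯ + x_h)·x_1·x_2·⋯·x_h = 0 } equals q^{k−h−1}(q^{h+1} − (q−1)^{h+1} + (−1)^h(q−1)) − 1; equivalently, q·(#D_1 + 1) = q^{k−h}(q^{h+1} − (q−1)^{h+1} + (−1)^h(q−1)). -/
/-!
Over a finite abelian group `G`, the additive characters detect whether a sum vanishes, so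
`|G|` times the number of `x ∈ (G ∖ {0})ⁿ` with `∑ xᵢ = 0` equals `∑_ψ (∑_{a ≠ 0} ψ a)ⁿ`. The
trivial character contributes `(|G| - 1)ⁿ` and each of the `|G| - 1` others contributes `(-1)ⁿ`.
Over a field `F`, `(∑ yᵢ) ∏ yᵢ ≠ 0` says that all entries of `y` and their sum are nonzero, so
complementation counts the zeros of `(∑ yᵢ) ∏ yᵢ`; every coordinate not occurring in this product
multiplies the count by `|F|`.
-/

open Finset

theorem addChar_map_sum {ι A M : Type*} [AddCommMonoid A] [CommMonoid M] (ψ : AddChar A M)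
    (s : Finset ι) (x : ι → A) : ψ (∑ i ∈ s, x i) = ∏ i ∈ s, ψ (x i) :=
  map_prod ψ.toMonoidHom (fun i => Multiplicative.ofAdd (x i)) s

theorem sum_compl_zero_addChar {G R : Type*} [AddGroup G] [Fintype G] [DecidableEq G] [CommRing R]
    [IsDomain R] (ψ : AddChar G R) [Decidable (ψ = 0)] :
    ∑ a ∈ {0}ᶜ, ψ a = if ψ = 0 then (Fintype.card G : R) - 1 else -1 := by
  have hsplit : ∑ a ∈ {0}ᶜ, ψ a + ψ 0 = ∑ a, ψ a := by
    simpa only [sum_singleton] using sum_compl_add_sum {0} ψ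
  rw [eq_sub_of_add_eq hsplit, AddChar.sum_eq_ite, AddChar.map_zero_eq_one]
  split_ifs <;> ring

section ZeroSum

variable (ι : Type*) {G : Type*} [Fintype ι] [DecidableEq ι] [AddCommGroup G] [Fintype G]
  [DecidableEq G]

theorem card_mul_card_filter_piFinset_sum_eq_zero (s : Finset G) :
    (Fintype.card G : ℂ) * #{x ∈ Fintype.piFinset fun _ : ι => s | ∑ i, x i = 0} =
      ∑ ψ : AddChar G ℂ, (∑ a ∈ s, ψ a) ^ Fintype.card ι := by
  calc (Fintype.card G : ℂ) * #{x ∈ Fintype.piFinset fun _ : ι => s | ∑ i, x i = 0}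
    _ = ∑ x ∈ Fintype.piFinset fun _ : ι => s, ∑ ψ : AddChar G ℂ, ψ (∑ i, x i) := by
      simp_rw [AddChar.sum_apply_eq_ite, ← sum_filter, sum_const, nsmul_eq_mul, mul_comm]
    _ = ∑ ψ : AddChar G ℂ, ∑ x ∈ Fintype.piFinset fun _ : ι => s, ∏ i, ψ (x i) := by
      simp_rw [sum_comm (s := Fintype.piFinset _), addChar_map_sum]
    _ = ∑ ψ : AddChar G ℂ, (∑ a ∈ s, ψ a) ^ Fintype.card ι := by
      simp_rw [← prod_univ_sum, prod_const, card_univ]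

variable (G)

theorem card_mul_card_filter_piFinset_compl_zero_sum_eq_zero :
    (Fintype.card G : ℤ) * #{x ∈ Fintype.piFinset fun _ : ι => ({0}ᶜ : Finset G) | ∑ i, x i = 0} =
      ((Fintype.card G : ℤ) - 1) ^ Fintype.card ι +
        (-1) ^ Fintype.card ι * ((Fintype.card G : ℤ) - 1) := by
  classical
  have hnontrivial : ∑ ψ ∈ ({0}ᶜ : Finset (AddChar G ℂ)), (∑ a ∈ {0}ᶜ, ψ a) ^ Fintype.card ι =
      (-1) ^ Fintype.card ι * ((Fintype.card G : ℂ) - 1) := by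
    have hpow : ∀ ψ ∈ ({0}ᶜ : Finset (AddChar G ℂ)),
        (∑ a ∈ {0}ᶜ, ψ a) ^ Fintype.card ι = (-1) ^ Fintype.card ι := fun ψ hψ => by
      rw [sum_compl_zero_addChar, if_neg (by simpa only [mem_compl, mem_singleton] using hψ)]
    rw [sum_congr rfl hpow, sum_const, card_compl, card_singleton, AddChar.card_eq, nsmul_eq_mul,
      Nat.cast_pred Fintype.card_pos, mul_comm]
  have hcount := card_mul_card_filter_piFinset_sum_eq_zero ι ({0}ᶜ : Finset G)
  rw [Fintype.sum_eq_add_sum_compl 0, hnontrivial, sum_compl_zero_addChar, if_pos rfl] at hcount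
  exact_mod_cast hcount

theorem card_mul_card_filter_piFinset_compl_zero_sum_ne_zero :
    (Fintype.card G : ℤ) * #{x ∈ Fintype.piFinset fun _ : ι => ({0}ᶜ : Finset G) | ∑ i, x i ≠ 0} =
      ((Fintype.card G : ℤ) - 1) ^ (Fintype.card ι + 1) -
        (-1) ^ Fintype.card ι * ((Fintype.card G : ℤ) - 1) := by
  have hsplit := congrArg (Nat.cast : ℕ → ℤ) <| card_filter_add_card_filter_not
    (s := Fintype.piFinset fun _ : ι => ({0}ᶜ : Finset G)) (fun x => ∑ i, x i = 0)
  rw [Fintype.card_piFinset, prod_const, card_univ, card_compl, card_singleton] at hsplit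
  push_cast [Nat.cast_pred (Fintype.card_pos (α := G))] at hsplit
  linear_combination
    (Fintype.card G : ℤ) * hsplit - card_mul_card_filter_piFinset_compl_zero_sum_eq_zero ι G

end ZeroSum

theorem card_mul_card_filter_sum_mul_prod_eq_zero (ι F : Type*) [Fintype ι] [DecidableEq ι]
    [Field F] [Fintype F] [DecidableEq F] :
    (Fintype.card F : ℤ) * #{y : ι → F | (∑ i, y i) * ∏ i, y i = 0} =
      (Fintype.card F : ℤ) ^ (Fintype.card ι + 1) -
        ((Fintype.card F : ℤ) - 1) ^ (Fintype.card ι + 1) +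
        (-1) ^ Fintype.card ι * ((Fintype.card F : ℤ) - 1) := by
  have hcompl : ({y | ¬(∑ i, y i) * ∏ i, y i = 0} : Finset (ι → F)) =
      {y ∈ Fintype.piFinset fun _ : ι => ({0}ᶜ : Finset F) | ∑ i, y i ≠ 0} := by
    ext y
    simp [prod_eq_zero_iff, and_comm]
  have hsplit := congrArg (Nat.cast : ℕ → ℤ) <| card_filter_add_card_filter_not
    (s := (univ : Finset (ι → F))) (fun y => (∑ i, y i) * ∏ i, y i = 0)
  rw [hcompl, card_univ, Fintype.card_fun] at hsplit
  push_cast at hsplit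
  linear_combination
    (Fintype.card F : ℤ) * hsplit - card_mul_card_filter_piFinset_compl_zero_sum_ne_zero ι F

theorem card_filter_comp_mem {ι κ α : Type*} [Fintype ι] [DecidableEq ι] [Fintype κ]
    [Fintype α] [DecidableEq (κ → α)] {f : κ → ι} (hf : f.Injective) (s : Finset (κ → α)) :
    #{x : ι → α | x ∘ f ∈ s} = #s * Fintype.card α ^ (Fintype.card ι - Fintype.card κ) := by
  classical
  let restrict : (ι → α) ≃ (κ → α) × ({i // i ∉ Set.range f} → α) :=
    (Equiv.piEquivPiSubtypeProd (· ∈ Set.range f) fun _ => α).trans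
      (Equiv.prodCongrLeft fun _ => (Equiv.ofInjective f hf).symm.arrowCongr (Equiv.refl α))
  have hfst : ∀ x, (restrict x).1 = x ∘ f := fun _ => rfl
  have hcompl : Fintype.card {i // i ∉ Set.range f} = Fintype.card ι - Fintype.card κ := by
    rw [Fintype.card_subtype_compl, ← Set.card_range_of_injective hf]
  calc #{x : ι → α | x ∘ f ∈ s}
    _ = #(s ×ˢ (univ : Finset ({i // i ∉ Set.range f} → α))) :=
      card_equiv restrict fun x => by
        simp only [mem_filter, mem_univ, true_and, mem_product, and_true, hfst]
    _ = #s * Fintype.card α ^ (Fintype.card ι - Fintype.card κ) := by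
      rw [card_product, card_univ, Fintype.card_fun, hcompl]

theorem card_subtype_ne_and_add_one {α : Type*} [Fintype α] {p : α → Prop} [DecidablePred p]
    {a : α} (ha : p a) : Nat.card {x // x ≠ a ∧ p x} + 1 = #{x | p x} := by
  classical
  rw [Nat.subtype_card (({x | p x} : Finset α).erase a) (by simp),
    card_erase_add_one (by simpa using ha)]

theorem stmt2_general {ι κ F : Type*} [Fintype ι] [Fintype κ] [Field F] [Fintype F]
    {f : κ → ι} (hf : f.Injective) :
    (Fintype.card F : ℤ) *
        (Nat.card {x : ι → F // x ≠ 0 ∧ (∑ j, x (f j)) * ∏ j, x (f j) = 0} + 1) =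
      (Fintype.card F : ℤ) ^ (Fintype.card ι - Fintype.card κ) *
        ((Fintype.card F : ℤ) ^ (Fintype.card κ + 1) -
          ((Fintype.card F : ℤ) - 1) ^ (Fintype.card κ + 1) +
          (-1) ^ Fintype.card κ * ((Fintype.card F : ℤ) - 1)) := by
  classical
  have hcount := calc
    Nat.card {x : ι → F // x ≠ 0 ∧ (∑ j, x (f j)) * ∏ j, x (f j) = 0} + 1
    _ = #{x : ι → F | (∑ j, x (f j)) * ∏ j, x (f j) = 0} :=
      card_subtype_ne_and_add_one (by simp)
    _ = #{x : ι → F | x ∘ f ∈ ({y | (∑ j, y j) * ∏ j, y j = 0} : Finset (κ → F))} := by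
      simp only [mem_filter, mem_univ, true_and, Function.comp_apply]
    _ = #{y : κ → F | (∑ j, y j) * ∏ j, y j = 0} *
          Fintype.card F ^ (Fintype.card ι - Fintype.card κ) :=
      card_filter_comp_mem hf _
  rw [← card_mul_card_filter_sum_mul_prod_eq_zero κ F, ← Nat.cast_add_one, hcount]
  push_cast
  ring

theorem stmt2 (q : ℕ) (F : Type*) [Field F] [Fintype F] (hF : Fintype.card F = q)
    (k h : ℕ) (hh : 4 ≤ h) (hhk : h ≤ k) :
    (q : ℤ) * ((Nat.card {x : Fin k → F // x ≠ 0 ∧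
        (∑ i : Fin h, x (Fin.castLE hhk i)) * ∏ i : Fin h, x (Fin.castLE hhk i) = 0} : ℤ) + 1)
      = (q : ℤ) ^ (k - h) *
        ((q : ℤ) ^ (h + 1) - ((q : ℤ) - 1) ^ (h + 1) + (-1) ^ h * ((q : ℤ) - 1)) := by
  simpa only [hF, Fintype.card_fin] using stmt2_general (F := F) (Fin.castLE_injective hhk)
end

section
/- Let q be a prime power, l ≥ 1 an integer, r_1, …, r_l ≥ 1 integers, α_1, …, α_l pairwise distinct elements of 𝔽_q^*, and γ ∈ 𝔽_q^*. Then the number of tuples (x^{(i)}_j)_{1 ≤ i ≤ l, 1 ≤ j ≤ r_i} with all entries in 𝔽_q^*, satisfying ∑_{i=1}^l ∑_{j=1}^{r_i} x^{(i)}_j = γ and ∑_{i=1}^l α_i (∑_{j=1}^{r_i} x^{(i)}_j) = 0, equals (ψ_{r_1+⋯+r_l} − A_{r_1,…,r_l})/(q−1). In particular this number is the same for every γ ∈ 𝔽_q^*. -/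
/-- `ψ_s = ((q-1)^s + (-1)^s (q-1))/q` (an exact integer division). -/
def psi (q s : ℕ) : ℤ := (((q : ℤ) - 1) ^ s + (-1) ^ s * ((q : ℤ) - 1)) / (q : ℤ)

/-- `φ_s = ((q-1)^s - ψ_s)/(q-1)` (an exact integer division). -/
def phi (q s : ℕ) : ℤ := (((q : ℤ) - 1) ^ s - psi q s) / ((q : ℤ) - 1)

/-- Auxiliary recursion for `A_{r_1,…,r_l}`, taking the list in reversed order
`[r_l, r_{l-1}, …, r_1]`. -/
def Arev (q : ℕ) : List ℕ → ℤ
  | [] => 0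
  | [r] => psi q r
  | r :: rs => psi q rs.sum * phi q r + (-1) ^ r * Arev q rs

/-- `A_{r_1,…,r_l}` for the list `[r_1, …, r_l]`. -/
def Atup (q : ℕ) (l : List ℕ) : ℤ := Arev q l.reverse

/-!
For a family `v` of vectors over `𝔽_q`, let `N_v(w)` be the number of ways to write `w` as a
combination of `v` with nonzero coefficients; it is invariant under scaling `w`. If `w ≠ 0` spans
the kernel of a linear map `f`, sorting the solutions of `∑ x_i f(v_i) = 0` by the multiple of `w`
they represent gives `N_{f ∘ v}(0) = N_v(0) + (q - 1) N_v(w)`.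

The count in question is `N_v(γ, 0)`, where `v` consists of the vectors `(1, α_i)`, each repeated
`r_i` times. Projecting to the second coordinate reduces it to `N_v(0)`, since the projected vectors
are nonzero scalars, for which the count at `0` is `ψ`. To compute `N_v(0)`, let `v'` be `v`
without its last block of `r` copies of `w = (1, α_l)`. Sorting by the multiple of `w` contributed
by this block gives `N_v(0) = ψ_r N_{v'}(0) + φ_r (q - 1) N_{v'}(w)`. Finally, the functional with
kernel spanned by `w` is nonzero on every `(1, α_i)` with `i < l`, hence
`(q - 1) N_{v'}(w) = ψ_{r_1 + ⋯ + r_{l-1}} - N_{v'}(0)`, and `ψ_r - φ_r = (-1)^r` turns this into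
the recursion of `A`.
-/

theorem mul_psi (q s : ℕ) :
    (q : ℤ) * psi q s = ((q : ℤ) - 1) ^ s + (-1) ^ s * ((q : ℤ) - 1) := by
  obtain ⟨k, hk⟩ : (q : ℤ) ∣ ((q : ℤ) - 1) ^ s - (-1) ^ s := by
    simpa using sub_dvd_pow_sub_pow ((q : ℤ) - 1) (-1) s
  exact Int.mul_ediv_cancel' ⟨k + (-1) ^ s, by linear_combination hk⟩

theorem psi_zero {q : ℕ} (hq : q ≠ 0) : psi q 0 = 1 :=
  mul_left_cancel₀ (Nat.cast_ne_zero.2 hq : (q : ℤ) ≠ 0) (by rw [mul_psi]; ring)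

theorem psi_succ {q : ℕ} (hq : q ≠ 0) (s : ℕ) :
    psi q (s + 1) = ((q : ℤ) - 1) ^ s - psi q s := by
  apply mul_left_cancel₀ (Nat.cast_ne_zero.2 hq : (q : ℤ) ≠ 0)
  linear_combination mul_psi q (s + 1) + mul_psi q s

theorem sub_one_mul_phi (q s : ℕ) :
    ((q : ℤ) - 1) * phi q s = ((q : ℤ) - 1) ^ s - psi q s := by
  have hcoprime : IsCoprime ((q : ℤ) - 1) q := ⟨-1, 1, by ring⟩
  refine Int.mul_ediv_cancel' (hcoprime.dvd_of_dvd_mul_left ⟨((q : ℤ) - 1) ^ s - (-1) ^ s, ?_⟩)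
  linear_combination -mul_psi q s

theorem psi_eq_phi_add {q : ℕ} (hq : 1 < q) (s : ℕ) : psi q s = phi q s + (-1) ^ s := by
  have hne : (q : ℤ) * (q - 1) ≠ 0 := mul_ne_zero (by lia) (by lia)
  apply mul_left_cancel₀ hne
  linear_combination (q : ℤ) * mul_psi q s - (q : ℤ) * sub_one_mul_phi q s

theorem Atup_singleton (q s : ℕ) : Atup q [s] = psi q s := rfl

theorem Atup_append_singleton (q : ℕ) {L : List ℕ} (hL : L ≠ []) (s : ℕ) :
    Atup q (L ++ [s]) = psi q L.sum * phi q s + (-1) ^ s * Atup q L := by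
  obtain ⟨t, M, hM⟩ := List.exists_cons_of_ne_nil (List.reverse_ne_nil_iff.2 hL)
  rw [← L.sum_reverse]
  simp [Atup, Arev, hM]

/-- The number of representations of `w` as a linear combination of the family `v` in which all
coefficients are units. A family may repeat a vector, so one equation in several blocks of
variables, or a system of such equations, is a single instance. -/
noncomputable def unitRepCount (F : Type*) {V ι : Type*} [Semiring F] [AddCommMonoid V]
    [Module F V] [Fintype ι] (v : ι → V) (w : V) : ℕ :=
  Nat.card {x : ι → Fˣ // ∑ i, (x i : F) • v i = w}

section Semiring

variable {F V ι κ : Type*} [Semiring F] [AddCommMonoid V] [Module F V] [Fintype ι] [Fintype κ]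

theorem unitRepCount_comp_equiv (e : ι ≃ κ) (v : κ → V) (w : V) :
    unitRepCount F (v ∘ e) w = unitRepCount F v w :=
  Nat.card_congr <| (e.arrowCongr (Equiv.refl Fˣ)).subtypeEquiv fun x => by
    rw [← e.sum_comp]
    simp

theorem unitRepCount_of_isEmpty [IsEmpty ι] (v : ι → V) : unitRepCount F v 0 = 1 := by
  simp [unitRepCount]

theorem unitRepCount_units_smul (v : ι → V) (u : Fˣ) (w : V) :
    unitRepCount F v ((u : F) • w) = unitRepCount F v w :=
  .symm <| Nat.card_congr <| (Equiv.mulLeft fun _ => u).subtypeEquiv fun x => by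
    simp only [Equiv.coe_mulLeft, Pi.mul_apply, Units.val_mul, mul_smul, ← Finset.smul_sum]
    exact (u.isUnit.smul_left_cancel).symm

end Semiring

theorem unitRepCount_sumElim {F V ι κ : Type*} [Ring F] [Fintype F] [AddCommGroup V] [Module F V]
    [Fintype ι] [Fintype κ] (v : ι → V) (a : κ → F) (w y : V) :
    unitRepCount F (Sum.elim v fun j => a j • w) y =
      ∑ t, unitRepCount F a t * unitRepCount F v (y - t • w) := by
  have hsum (x : ι ⊕ κ → Fˣ) :
      ∑ i, (x i : F) • Sum.elim v (fun j => a j • w) i = y ↔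
        ∑ i, (x (.inl i) : F) • v i = y - (∑ j, (x (.inr j) : F) • a j) • w := by
    simp [Fintype.sum_sum_type, eq_sub_iff_add_eq, Finset.sum_smul, mul_smul]
  let e : {x : ι ⊕ κ → Fˣ // ∑ i, (x i : F) • Sum.elim v (fun j => a j • w) i = y} ≃
      Σ t : F, {z : κ → Fˣ // ∑ j, (z j : F) • a j = t} ×
        {x : ι → Fˣ // ∑ i, (x i : F) • v i = y - t • w} :=
    { toFun x := ⟨_, ⟨x.1 ∘ .inr, rfl⟩, ⟨x.1 ∘ .inl, (hsum x).1 x.2⟩⟩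
      invFun p := ⟨Sum.elim p.2.2 p.2.1, (hsum _).2 (p.2.1.2.symm ▸ p.2.2.2)⟩
      left_inv x := Subtype.ext (Sum.elim_comp_inl_inr _)
      right_inv := by
        rintro ⟨_, ⟨z, rfl⟩, x⟩
        rfl }
  simp only [unitRepCount, Nat.card_congr e, Nat.card_sigma, Nat.card_prod]

section Field

variable {F : Type*} [Field F] [Fintype F]

theorem sum_eq_apply_zero_add_of_forall_units {R : Type*} [Ring R] (g : F → R)
    (hg : ∀ u : Fˣ, g u = g 1) : ∑ t, g t = g 0 + ((Fintype.card F : R) - 1) * g 1 := by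
  classical
  have hconst (t : F) (ht : t ∈ ({0}ᶜ : Finset F)) : g t = g 1 :=
    hg (Units.mk0 t (by simpa using ht))
  rw [Fintype.sum_eq_add_sum_compl 0, Finset.sum_congr rfl hconst, Finset.sum_const,
    Finset.card_compl, Finset.card_singleton, nsmul_eq_mul, Nat.cast_sub Fintype.card_pos,
    Nat.cast_one]

variable {V W ι κ : Type*} [AddCommGroup V] [Module F V] [AddCommGroup W] [Module F W]
  [Fintype ι] [Fintype κ]

theorem unitRepCount_comp_eq_sum (v : ι → V) {w : V} (hw : w ≠ 0) (f : V →ₗ[F] W)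
    (hf : LinearMap.ker f = F ∙ w) :
    unitRepCount F (f ∘ v) 0 = ∑ t : F, unitRepCount F v (t • w) := by
  have hker (x : ι → Fˣ) :
      ∑ i, (x i : F) • (f ∘ v) i = 0 ↔ ∃ t : F, t • w = ∑ i, (x i : F) • v i := by
    rw [← Submodule.mem_span_singleton, ← hf, LinearMap.mem_ker]
    simp
  let toKer (p : Σ t : F, {x : ι → Fˣ // ∑ i, (x i : F) • v i = t • w}) :
      {x : ι → Fˣ // ∑ i, (x i : F) • (f ∘ v) i = 0} :=
    ⟨p.2, (hker _).2 ⟨p.1, p.2.2.symm⟩⟩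
  have hbij : toKer.Bijective := by
    constructor
    · rintro ⟨t, x, hx⟩ ⟨t', x', hx'⟩ h
      obtain rfl : x = x' := congrArg Subtype.val h
      obtain rfl : t = t' := smul_left_injective F hw (hx.symm.trans hx')
      rfl
    · rintro ⟨x, hx⟩
      obtain ⟨t, ht⟩ := (hker x).1 hx
      exact ⟨⟨t, x, ht.symm⟩, rfl⟩
  simp only [unitRepCount, ← Nat.card_congr (Equiv.ofBijective toKer hbij), Nat.card_sigma]

theorem unitRepCount_comp_zero (v : ι → V) {w : V} (hw : w ≠ 0) (f : V →ₗ[F] W)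
    (hf : LinearMap.ker f = F ∙ w) :
    (unitRepCount F (f ∘ v) 0 : ℤ) =
      unitRepCount F v 0 + ((Fintype.card F : ℤ) - 1) * unitRepCount F v w := by
  rw [unitRepCount_comp_eq_sum v hw f hf, Nat.cast_sum,
    sum_eq_apply_zero_add_of_forall_units fun t : F => (unitRepCount F v (t • w) : ℤ)]
  · simp only [zero_smul, one_smul]
  · intro u
    rw [unitRepCount_units_smul, one_smul]

theorem card_sub_one_pow_eq_unitRepCount_add (a : ι → F) {c : F} (hc : c ≠ 0) :
    ((Fintype.card F : ℤ) - 1) ^ Fintype.card ι =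
      unitRepCount F a 0 + ((Fintype.card F : ℤ) - 1) * unitRepCount F a c := by
  classical
  have hspan : LinearMap.ker (0 : F →ₗ[F] F) = F ∙ c := by
    rw [LinearMap.ker_zero]
    exact (Ideal.span_singleton_eq_top.2 hc.isUnit).symm
  rw [← unitRepCount_comp_zero a hc 0 hspan]
  simp [unitRepCount, Fintype.card_units, Nat.cast_sub Fintype.card_pos]

theorem unitRepCount_sumElim_zero (v : ι → V) (a : κ → F) (w : V) :
    (unitRepCount F (Sum.elim v fun j => a j • w) 0 : ℤ) =
      unitRepCount F a 0 * unitRepCount F v 0 +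
        ((Fintype.card F : ℤ) - 1) * (unitRepCount F a 1 * unitRepCount F v w) := by
  have hneg (t : F) : unitRepCount F v (0 - t • w) = unitRepCount F v (t • w) := by
    simpa using unitRepCount_units_smul v (-1 : Fˣ) (t • w)
  simp only [unitRepCount_sumElim, hneg]
  push_cast
  rw [sum_eq_apply_zero_add_of_forall_units fun t : F =>
    (unitRepCount F a t * unitRepCount F v (t • w) : ℤ)]
  · simp only [zero_smul, one_smul]
  · intro u
    have ha := unitRepCount_units_smul a u 1
    rw [smul_eq_mul, mul_one] at ha
    rw [ha, unitRepCount_units_smul, one_smul]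

theorem unitRepCount_sumElim_unit_zero (v : ι → F) {c : F} (hc : c ≠ 0) :
    (unitRepCount F (Sum.elim v fun _ : Unit => c) 0 : ℤ) =
      ((Fintype.card F : ℤ) - 1) ^ Fintype.card ι - unitRepCount F v 0 := by
  have hzero : unitRepCount F (fun _ : Unit => (1 : F)) 0 = 0 := by simp [unitRepCount]
  have hone := card_sub_one_pow_eq_unitRepCount_add (fun _ : Unit => (1 : F)) one_ne_zero
  have hsum := unitRepCount_sumElim_zero v (fun _ : Unit => (1 : F)) c
  simp only [hzero, one_smul, Fintype.card_unit, pow_one] at hone hsum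
  push_cast at hone hsum
  linear_combination hsum - card_sub_one_pow_eq_unitRepCount_add v hc - unitRepCount F v c * hone

theorem unitRepCount_zero_eq_psi (a : ι → F) (ha : ∀ i, a i ≠ 0) :
    (unitRepCount F a 0 : ℤ) = psi (Fintype.card F) (Fintype.card ι) := by
  revert a
  refine Fintype.induction_empty_option
    (P := fun ι _ => ∀ a : ι → F, (∀ i, a i ≠ 0) →
      (unitRepCount F a 0 : ℤ) = psi (Fintype.card F) (Fintype.card ι)) ?_ ?_ ?_ ι
  · intro ι κ _ e ih a ha
    let _ := Fintype.ofEquiv κ e.symm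
    rw [← unitRepCount_comp_equiv e, ih (a ∘ e) fun i => ha _, Fintype.card_congr e]
  · intro a _
    rw [unitRepCount_of_isEmpty, Fintype.card_pempty, psi_zero Fintype.card_ne_zero, Nat.cast_one]
  · intro ι _ ih a ha
    have helim : a ∘ (Equiv.optionEquivSumPUnit ι).symm =
        Sum.elim (a ∘ some) fun _ : Unit => a none := by
      ext (i | i) <;> rfl
    rw [← unitRepCount_comp_equiv (Equiv.optionEquivSumPUnit ι).symm, helim,
      unitRepCount_sumElim_unit_zero _ (ha none), ih (a ∘ some) fun i => ha _,
      Fintype.card_option, psi_succ Fintype.card_ne_zero]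

theorem unitRepCount_eq_phi (a : ι → F) (ha : ∀ i, a i ≠ 0) {c : F} (hc : c ≠ 0) :
    (unitRepCount F a c : ℤ) = phi (Fintype.card F) (Fintype.card ι) := by
  have hq : (Fintype.card F : ℤ) - 1 ≠ 0 :=
    sub_ne_zero.2 (by exact_mod_cast Fintype.one_lt_card.ne')
  apply mul_left_cancel₀ hq
  rw [sub_one_mul_phi, card_sub_one_pow_eq_unitRepCount_add a hc, unitRepCount_zero_eq_psi a ha]
  ring

theorem unitRepCount_sumElim_const_zero (v : ι → V) {w : V} (hw : w ≠ 0) (f : V →ₗ[F] F)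
    (hf : LinearMap.ker f = F ∙ w) (hv : ∀ i, f (v i) ≠ 0) :
    (unitRepCount F (Sum.elim v fun _ : κ => w) 0 : ℤ) =
      psi (Fintype.card F) (Fintype.card ι) * phi (Fintype.card F) (Fintype.card κ) +
        (-1) ^ Fintype.card κ * unitRepCount F v 0 := by
  have hsum := unitRepCount_sumElim_zero v (fun _ : κ => (1 : F)) w
  simp only [one_smul] at hsum
  rw [unitRepCount_zero_eq_psi _ fun _ => one_ne_zero,
    unitRepCount_eq_phi _ (fun _ => one_ne_zero) one_ne_zero,
    psi_eq_phi_add Fintype.one_lt_card (Fintype.card κ)] at hsum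
  have hquot := unitRepCount_comp_zero v hw f hf
  rw [unitRepCount_zero_eq_psi (f ∘ v) hv] at hquot
  linear_combination hsum - phi (Fintype.card F) (Fintype.card κ) * hquot

end Field

/-- The coefficient vectors `(1, α_i)`, repeated `r_i` times, of the pair of equations on the block
sums: a solution with nonzero entries represents the right-hand side `(γ, 0)` by these vectors. -/
def blockVector {F : Type*} [One F] {l : ℕ} (r : Fin l → ℕ) (α : Fin l → F)
    (p : Σ i, Fin (r i)) : F × F :=
  (1, α p.1)

theorem bijective_sumElim_sigmaMap_castSucc_mk_last {l : ℕ} (β : Fin (l + 1) → Type*) :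
    (Sum.elim (Sigma.map Fin.castSucc fun _ => id) (Sigma.mk (Fin.last l)) :
      (Σ i : Fin l, β i.castSucc) ⊕ β (Fin.last l) → Σ i, β i).Bijective := by
  constructor
  · refine .sumElim ((Fin.castSucc_injective l).sigma_map fun _ => Function.injective_id)
      sigma_mk_injective ?_
    rintro ⟨i, x⟩ y h
    exact i.castSucc_ne_last (congrArg Sigma.fst h)
  · rintro ⟨i, x⟩
    induction i using Fin.lastCases with
    | last => exact ⟨.inr x, rfl⟩
    | cast i => exact ⟨.inl ⟨i, x⟩, rfl⟩

section Blocks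

variable {F : Type*} [Field F]

theorem natCard_eq_unitRepCount_blockVector {l : ℕ} (r : Fin l → ℕ) (α : Fin l → F) (c d : F) :
    Nat.card {x : (i : Fin l) → Fin (r i) → F //
      (∀ i j, x i j ≠ 0) ∧ (∑ i, ∑ j, x i j) = c ∧ (∑ i, α i * ∑ j, x i j) = d} =
      unitRepCount F (blockVector r α) (c, d) := by
  have hsum (x : (Σ i, Fin (r i)) → Fˣ) :
      ∑ p, (x p : F) • blockVector r α p = (c, d) ↔
        ∑ i, ∑ j, (x ⟨i, j⟩ : F) = c ∧ ∑ i, α i * ∑ j, (x ⟨i, j⟩ : F) = d := by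
    simp [blockVector, Prod.ext_iff, Prod.fst_sum, Prod.snd_sum, Fintype.sum_sigma,
      Finset.mul_sum, mul_comm]
  refine Nat.card_congr
    { toFun x := ⟨fun p => Units.mk0 (x.1 p.1 p.2) (x.2.1 p.1 p.2), (hsum _).2 x.2.2⟩
      invFun x := ⟨fun i j => x.1 ⟨i, j⟩, fun i j => (x.1 ⟨i, j⟩).ne_zero, (hsum _).1 x.2⟩
      left_inv x := rfl
      right_inv x := ?_ }
  ext p
  rfl

theorem ker_snd_sub_smul_fst {R : Type*} [CommRing R] (a : R) :
    LinearMap.ker (LinearMap.snd R R R - a • LinearMap.fst R R R) = R ∙ ((1, a) : R × R) := by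
  ext ⟨s, t⟩
  simp [Submodule.mem_span_singleton, sub_eq_zero, eq_comm, mul_comm]

theorem ker_snd_eq_span {c : F} (hc : c ≠ 0) :
    LinearMap.ker (LinearMap.snd F F F) = F ∙ ((c, 0) : F × F) := by
  ext ⟨s, t⟩
  simp only [LinearMap.mem_ker, LinearMap.snd_apply, Submodule.mem_span_singleton, Prod.smul_mk,
    smul_eq_mul, mul_zero, Prod.mk.injEq, exists_and_right]
  exact ⟨fun ht => ⟨⟨s / c, div_mul_cancel₀ s hc⟩, ht.symm⟩, fun h => h.2.symm⟩

variable [Fintype F]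

theorem unitRepCount_blockVector_succ {l : ℕ} (r : Fin (l + 1) → ℕ) (α : Fin (l + 1) → F)
    (hα : Function.Injective α) :
    (unitRepCount F (blockVector r α) 0 : ℤ) =
      psi (Fintype.card F) (∑ i : Fin l, r i.castSucc) *
          phi (Fintype.card F) (r (Fin.last l)) +
        (-1) ^ r (Fin.last l) *
          unitRepCount F (blockVector (r ∘ Fin.castSucc) (α ∘ Fin.castSucc)) 0 := by
  let e := Equiv.ofBijective _
    (bijective_sumElim_sigmaMap_castSucc_mk_last fun i : Fin (l + 1) => Fin (r i))
  have hsplit : blockVector r α ∘ e =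
      Sum.elim (blockVector (r ∘ Fin.castSucc) (α ∘ Fin.castSucc))
        fun _ : Fin (r (Fin.last l)) => ((1, α (Fin.last l)) : F × F) := by
    funext p
    rcases p with p | j <;> rfl
  have hne (p : Σ i : Fin l, Fin (r i.castSucc)) :
      (LinearMap.snd F F F - α (Fin.last l) • LinearMap.fst F F F)
        (blockVector (r ∘ Fin.castSucc) (α ∘ Fin.castSucc) p) ≠ 0 := by
    simpa [blockVector, sub_eq_zero] using hα.ne p.1.castSucc_ne_last
  rw [← unitRepCount_comp_equiv e, hsplit,
    unitRepCount_sumElim_const_zero _ (by simp) _ (ker_snd_sub_smul_fst _) hne]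
  simp

theorem unitRepCount_blockVector_zero {l : ℕ} (hl : 1 ≤ l) (r : Fin l → ℕ) (α : Fin l → F)
    (hα : Function.Injective α) :
    (unitRepCount F (blockVector r α) 0 : ℤ) = Atup (Fintype.card F) (List.ofFn r) := by
  induction l, hl using Nat.le_induction with
  | base =>
    rw [unitRepCount_blockVector_succ r α hα, unitRepCount_of_isEmpty, List.ofFn_succ,
      List.ofFn_zero, Atup_singleton, Finset.univ_eq_empty, Finset.sum_empty,
      psi_zero Fintype.card_ne_zero, one_mul, Nat.cast_one, mul_one,
      ← psi_eq_phi_add Fintype.one_lt_card, Fin.last_zero]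
  | succ l hl ih =>
    have hne : List.ofFn (r ∘ Fin.castSucc) ≠ [] := by
      rw [Ne, List.ofFn_eq_nil_iff]
      lia
    rw [unitRepCount_blockVector_succ r α hα, ih _ _ (hα.comp (Fin.castSucc_injective l)),
      List.ofFn_succ', List.concat_eq_append]
    simpa only [List.sum_ofFn, Function.comp_def] using
      (Atup_append_singleton (Fintype.card F) hne (r (Fin.last l))).symm

end Blocks

theorem stmt5 (q : ℕ) (F : Type*) [Field F] [Fintype F] (hF : Fintype.card F = q)
    (l : ℕ) (hl : 1 ≤ l) (r : Fin l → ℕ) (hr : ∀ i, 1 ≤ r i)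
    (α : Fin l → F) (hαinj : Function.Injective α) (hα0 : ∀ i, α i ≠ 0)
    (γ : F) (hγ : γ ≠ 0) :
    (Nat.card {x : (i : Fin l) → Fin (r i) → F //
        (∀ i j, x i j ≠ 0) ∧ (∑ i, ∑ j, x i j) = γ ∧ (∑ i, α i * ∑ j, x i j) = 0} : ℤ)
        * ((q : ℤ) - 1)
      = psi q (∑ i, r i) - Atup q (List.ofFn r) := by
  subst hF
  have hsnd : (unitRepCount F (LinearMap.snd F F F ∘ blockVector r α) 0 : ℤ) =
      psi (Fintype.card F) (∑ i, r i) := by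
    rw [unitRepCount_zero_eq_psi (LinearMap.snd F F F ∘ blockVector r α) fun p => hα0 p.1,
      Fintype.card_sigma]
    simp only [Fintype.card_fin]
  rw [natCard_eq_unitRepCount_blockVector, ← hsnd,
    ← unitRepCount_blockVector_zero hl r α hαinj,
    unitRepCount_comp_zero _ (by simpa using hγ) _ (ker_snd_eq_span hγ)]
  ring
end

section
/- Let q be an odd prime power and let 3 ≤ h ≤ k be integers. Then the cardinality of D_2 = { x ∈ 𝔽_q^k \ {0} : x_i + x_j = 0 for some 1 ≤ i < j ≤ h } equals q^{k−h}·(q^h − Γ(h,q) − h·Γ(h−1,q)) − 1. -/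
/-- `S(x,y)`: the number of surjective functions from a set of size `x` onto a set of size `y`. -/
noncomputable def numSurj (x y : ℕ) : ℕ := Nat.card {f : Fin x → Fin y // Function.Surjective f}

/-- `Γ(h,q) = ∑_{s=1}^{min(h,(q-1)/2)} ((q-1)(q-3)⋯(q-2s+1)/s!)·S(h,s)`
(the inner division is exact). -/
noncomputable def Gamma (q h : ℕ) : ℕ :=
  ∑ s ∈ Finset.Icc 1 (min h ((q - 1) / 2)),
    ((∏ t ∈ Finset.range s, (q - 1 - 2 * t)) / Nat.factorial s) * numSurj h s

/-!
Call a set antipode-free if no two of its elements, equal or not, sum to zero. In a group of odd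
order `q` only `0` is its own negative, so the elements that cannot be added to an antipode-free set
`A` of size `s` are the `2s + 1` elements of `A ∪ -A ∪ {0}`. Double counting inclusions gives
`(q-1)(q-3)⋯(q-2s+1)/s!` antipode-free sets of size `s`, and grouping functions by their range shows
that `Γ(n,q)` counts the functions from an `n`-set with antipode-free range. A function whose values
at distinct arguments never sum to zero either has antipode-free range or vanishes at exactly one
argument and has antipode-free range away from it, which gives `Γ(h,q) + h·Γ(h-1,q)` functions on an
`h`-set. The vectors to be counted are the nonzero ones whose first `h` coordinates do not form such
a function.
-/

open Finset
open scoped Pointwise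

section Subtypes

variable {α : Type*} [Finite α]

lemma card_ne_and_add_one {P : α → Prop} {a : α} (ha : P a) :
    Nat.card {x // x ≠ a ∧ P x} + 1 = Nat.card {x // P x} := by
  have herase : {x | P x} \ {a} = {x | x ≠ a ∧ P x} := Set.ext fun x => and_comm
  have hcard := Set.ncard_sdiff_singleton_add_one (s := {x | P x}) ha
  rwa [herase] at hcard

lemma card_not_add_card (P : α → Prop) :
    Nat.card {x // ¬P x} + Nat.card {x // P x} = Nat.card α := by
  classical rw [add_comm, ← Nat.card_sum, Nat.card_congr (Equiv.sumCompl P)]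

end Subtypes

section Functions

variable {ι κ α : Type*} [Fintype ι] [Fintype κ] [Fintype α]

lemma card_surjective_eq_numSurj :
    Nat.card {f : ι → α // f.Surjective} = numSurj (Fintype.card ι) (Fintype.card α) :=
  Nat.card_congr <| (Equiv.arrowCongr (Fintype.equivFin ι) (Fintype.equivFin α)).subtypeEquiv
    fun f => by simp [Equiv.arrowCongr]

lemma card_filter_image_univ_eq [DecidableEq ι] [DecidableEq α] (A : Finset α) :
    #{f : ι → α | univ.image f = A} = numSurj (Fintype.card ι) #A := by
  have mem_of_image_eq {f : ι → α} (hf : univ.image f = A) (i : ι) : f i ∈ A :=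
    hf ▸ mem_image_of_mem f (mem_univ i)
  let e : {f : ι → α // univ.image f = A} ≃ {f : ι → A // f.Surjective} :=
    { toFun f := ⟨fun i => ⟨f.1 i, mem_of_image_eq f.2 i⟩, fun a => by
        obtain ⟨i, -, hi⟩ := mem_image.1 (show a.1 ∈ univ.image f.1 by rw [f.2]; exact a.2)
        exact ⟨i, Subtype.ext hi⟩⟩
      invFun f := ⟨fun i => f.1 i, by
        ext a
        simpa [Subtype.ext_iff] using
          ⟨fun ⟨i, hi⟩ => hi ▸ (f.1 i).2, fun ha => (f.2 ⟨a, ha⟩).imp fun i hi => by rw [hi]⟩⟩ }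
  rw [← Fintype.card_subtype, ← Nat.card_eq_fintype_card, Nat.card_congr e,
    card_surjective_eq_numSurj, Fintype.card_coe]

lemma card_comp_embedding (e : ι ↪ κ) (P : (ι → α) → Prop) :
    Nat.card {x : κ → α // P (x ∘ e)} =
      Fintype.card α ^ (Fintype.card κ - Fintype.card ι) * Nat.card {y : ι → α // P y} := by
  classical
  let split : (κ → α) ≃ (ι → α) × (((Set.range e)ᶜ : Set κ) → α) :=
    (Equiv.arrowCongr (((Equiv.ofInjective e e.injective).sumCongr (Equiv.refl _)).trans
      (Equiv.Set.sumCompl (Set.range e))).symm (Equiv.refl α)).trans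
      (Equiv.sumArrowEquivProdArrow _ _ _)
  let splitSubtype : {x : κ → α // P (x ∘ e)} ≃
      {y : ι → α // P y} × (((Set.range e)ᶜ : Set κ) → α) :=
    (split.subtypeEquiv (q := fun z => P z.1) fun x => Iff.rfl).trans
      (Equiv.prodSubtypeFstEquivSubtypeProd (p := P))
  have hcompl : Fintype.card ((Set.range e)ᶜ : Set κ) = Fintype.card κ - Fintype.card ι := by
    rw [Fintype.card_compl_set, Set.card_range_of_injective e.injective]
  rw [Nat.card_congr splitSubtype, Nat.card_prod, Nat.card_fun, Nat.card_eq_fintype_card (α := α),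
    Nat.card_eq_fintype_card (α := ((Set.range e)ᶜ : Set κ)), hcompl, mul_comm]

end Functions

section AntipodeFree

variable {G : Type*} [AddGroup G] [Fintype G]

lemma add_self_eq_zero_iff_of_odd_card (hG : Odd (Fintype.card G)) {a : G} :
    a + a = 0 ↔ a = 0 := by
  have hcop : (Nat.card G).Coprime 2 := by
    rw [Nat.card_eq_fintype_card]
    exact hG.coprime_two_right
  rw [← two_nsmul]
  exact ⟨fun h => (nsmulCoprime hcop).injective (by simpa using h), fun h => by simp [h]⟩

variable [DecidableEq G]

variable (G) in
/-- The antipode-free sets of size `s`: the `s`-element subsets `A` of `G` in which no two elements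
sum to zero. The two elements may coincide, so that `0 ∉ A`. -/
def antipodeFreeSets (s : ℕ) : Finset (Finset G) :=
  {A ∈ powersetCard s univ | ∀ a ∈ A, ∀ b ∈ A, a + b ≠ 0}

lemma mem_antipodeFreeSets {s : ℕ} {A : Finset G} :
    A ∈ antipodeFreeSets G s ↔ #A = s ∧ ∀ a ∈ A, ∀ b ∈ A, a + b ≠ 0 := by
  simp [antipodeFreeSets]

lemma mem_antipodeFreeSets_of_subset {s : ℕ} {A B : Finset G} (hB : B ∈ antipodeFreeSets G s)
    (hAB : A ⊆ B) : A ∈ antipodeFreeSets G #A :=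
  mem_antipodeFreeSets.2 ⟨rfl, fun a ha b hb =>
    (mem_antipodeFreeSets.1 hB).2 a (hAB ha) b (hAB hb)⟩

lemma card_insert_zero_union_neg {s : ℕ} {A : Finset G} (hA : A ∈ antipodeFreeSets G s) :
    #(insert 0 (A ∪ -A)) = 2 * s + 1 := by
  obtain ⟨hs, hfree⟩ := mem_antipodeFreeSets.1 hA
  have hzero : (0 : G) ∉ A := fun h => hfree 0 h 0 h (add_zero 0)
  have hdisj : Disjoint A (-A) :=
    disjoint_left.2 fun a ha hna => hfree a ha (-a) (mem_neg'.1 hna) (add_neg_cancel a)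
  rw [card_insert_of_notMem (by simpa using hzero), card_union_of_disjoint hdisj, card_neg, hs,
    two_mul]

lemma insert_mem_antipodeFreeSets_iff (hG : Odd (Fintype.card G)) {s : ℕ} {A : Finset G}
    (hA : A ∈ antipodeFreeSets G s) {a : G} (ha : a ∉ A) :
    insert a A ∈ antipodeFreeSets G (s + 1) ↔ a ∉ insert 0 (A ∪ -A) := by
  obtain ⟨hs, hfree⟩ := mem_antipodeFreeSets.1 hA
  have hneg : -a ∉ A ↔ ∀ b ∈ A, a + b ≠ 0 :=
    ⟨fun h b hb hab => h (neg_eq_of_add_eq_zero_right hab ▸ hb),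
      fun h hna => h _ hna (add_neg_cancel a)⟩
  have hself : a ≠ 0 ↔ a + a ≠ 0 := (add_self_eq_zero_iff_of_odd_card hG).not.symm
  rw [mem_antipodeFreeSets, card_insert_of_notMem ha, hs]
  simp only [mem_insert, mem_union, mem_neg', not_or, ha, not_false_eq_true, true_and, hneg, hself]
  constructor
  · exact fun h => ⟨h a (.inl rfl) a (.inl rfl), fun b hb => h a (.inl rfl) b (.inr hb)⟩
  · rintro ⟨haa, hab⟩ x (rfl | hx) y (rfl | hy)
    exacts [haa, hab y hy, mt add_eq_zero_comm.1 (hab x hx), hfree x hx y hy]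

lemma card_antipodeFreeSets_filter_superset (hG : Odd (Fintype.card G)) {s : ℕ} {A : Finset G}
    (hA : A ∈ antipodeFreeSets G s) :
    #{B ∈ antipodeFreeSets G (s + 1) | A ⊆ B} = Fintype.card G - 1 - 2 * s := by
  have hAs := (mem_antipodeFreeSets.1 hA).1
  have hA_sub : A ⊆ insert 0 (A ∪ -A) := subset_union_left.trans (subset_insert _ _)
  have himage : {B ∈ antipodeFreeSets G (s + 1) | A ⊆ B} =
      (insert 0 (A ∪ -A))ᶜ.image (insert · A) := by
    ext B
    simp only [mem_filter, mem_image, mem_compl]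
    constructor
    · rintro ⟨hB, hAB⟩
      have hsdiff : #(B \ A) = 1 := by
        rw [card_sdiff_of_subset hAB, (mem_antipodeFreeSets.1 hB).1, hAs, Nat.add_sub_cancel_left]
      obtain ⟨a, ha, rfl⟩ :=
        covBy_iff_exists_insert.1 (covBy_iff_card_sdiff_eq_one.2 ⟨hAB, hsdiff⟩)
      exact ⟨a, (insert_mem_antipodeFreeSets_iff hG hA ha).1 hB, rfl⟩
    · rintro ⟨a, ha, rfl⟩
      exact ⟨(insert_mem_antipodeFreeSets_iff hG hA fun h => ha (hA_sub h)).2 ha,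
        subset_insert a A⟩
  have hinj : Set.InjOn (insert · A) ((insert 0 (A ∪ -A))ᶜ : Finset G) := fun a ha b _ hab =>
    (insert_inj fun h => mem_compl.1 ha (hA_sub h)).1 hab
  rw [himage, card_image_of_injOn hinj, card_compl, card_insert_zero_union_neg hA]
  omega

lemma card_antipodeFreeSets_mul (hG : Odd (Fintype.card G)) (s : ℕ) :
    #(antipodeFreeSets G s) * (Fintype.card G - 1 - 2 * s) =
      #(antipodeFreeSets G (s + 1)) * (s + 1) := by
  refine card_mul_eq_card_mul (fun A B : Finset G => A ⊆ B)
    (fun A hA => card_antipodeFreeSets_filter_superset hG hA) fun B hB => ?_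
  have hbelow : {A ∈ antipodeFreeSets G s | A ⊆ B} = powersetCard s B := by
    ext A
    rw [mem_filter, mem_powersetCard]
    exact ⟨fun h => ⟨h.2, (mem_antipodeFreeSets.1 h.1).1⟩,
      fun h => ⟨h.2 ▸ mem_antipodeFreeSets_of_subset hB h.1, h.1⟩⟩
  rw [bipartiteBelow, hbelow, card_powersetCard, (mem_antipodeFreeSets.1 hB).1,
    Nat.choose_succ_self_right]

lemma card_antipodeFreeSets_mul_factorial (hG : Odd (Fintype.card G)) (s : ℕ) :
    #(antipodeFreeSets G s) * s.factorial = ∏ t ∈ range s, (Fintype.card G - 1 - 2 * t) := by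
  induction s with
  | zero => simp [antipodeFreeSets, filter_singleton]
  | succ s ih =>
    rw [prod_range_succ, ← ih, Nat.factorial_succ, ← mul_assoc, ← card_antipodeFreeSets_mul hG]
    ring

theorem card_antipodeFreeSets (hG : Odd (Fintype.card G)) (s : ℕ) :
    #(antipodeFreeSets G s) =
      (∏ t ∈ range s, (Fintype.card G - 1 - 2 * t)) / s.factorial := by
  rw [← card_antipodeFreeSets_mul_factorial hG, Nat.mul_div_cancel _ s.factorial_pos]

lemma antipodeFreeSets_eq_empty (hG : Odd (Fintype.card G)) {s : ℕ}
    (hs : (Fintype.card G - 1) / 2 < s) : antipodeFreeSets G s = ∅ := by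
  have hfactor : Fintype.card G - 1 - 2 * ((Fintype.card G - 1) / 2) = 0 := by
    obtain ⟨m, hm⟩ := hG
    omega
  rw [← card_eq_zero, card_antipodeFreeSets hG, prod_eq_zero (mem_range.2 hs) hfactor,
    Nat.zero_div]

variable {ι : Type*} [Fintype ι]

lemma image_mem_antipodeFreeSets_iff {f : ι → G} {s : ℕ} :
    univ.image f ∈ antipodeFreeSets G s ↔ (∀ i j, f i + f j ≠ 0) ∧ #(univ.image f) = s := by
  simp [mem_antipodeFreeSets, and_comm]

variable [DecidableEq ι]

lemma card_forall_add_ne_zero_and_card_image_eq (s : ℕ) :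
    #{f : ι → G | (∀ i j, f i + f j ≠ 0) ∧ #(univ.image f) = s} =
      #(antipodeFreeSets G s) * numSurj (Fintype.card ι) s := by
  simp only [← image_mem_antipodeFreeSets_iff]
  rw [card_eq_sum_card_fiberwise (f := fun f => univ.image f) (t := antipodeFreeSets G s)
    fun f hf => by simpa using hf]
  refine sum_const_nat fun A hA => ?_
  rw [filter_filter, ← (mem_antipodeFreeSets.1 hA).1, ← card_filter_image_univ_eq]
  congr 1
  ext f
  simp only [mem_filter_univ, and_iff_right_iff_imp]
  rintro rfl
  exact mem_antipodeFreeSets_of_subset hA Subset.rfl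

theorem card_forall_add_ne_zero [Nonempty ι] (hG : Odd (Fintype.card G)) :
    #{f : ι → G | ∀ i j, f i + f j ≠ 0} = Gamma (Fintype.card G) (Fintype.card ι) := by
  have hrange (f : ι → G) : #(univ.image f) ∈ Icc 1 (Fintype.card ι) :=
    mem_Icc.2 ⟨(univ_nonempty.image f).card_pos, card_image_le⟩
  rw [card_eq_sum_card_fiberwise (f := fun f => #(univ.image f)) fun f _ => hrange f, Gamma]
  simp only [filter_filter, card_forall_add_ne_zero_and_card_image_eq, ← card_antipodeFreeSets hG]
  refine (sum_subset (Icc_subset_Icc_right (min_le_left _ _)) fun s hs hs' => ?_).symm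
  rw [antipodeFreeSets_eq_empty hG (by simp only [mem_Icc] at hs hs'; omega), card_empty, zero_mul]

end AntipodeFree

section Pairwise

variable {G ι : Type*} [AddGroup G]

lemma pairwise_add_ne_zero_and_forall_ne_zero_iff [Fintype G] (hG : Odd (Fintype.card G))
    {f : ι → G} :
    ((Pairwise fun i j => f i + f j ≠ 0) ∧ ∀ i, f i ≠ 0) ↔ ∀ i j, f i + f j ≠ 0 := by
  have hself (i : ι) : f i ≠ 0 ↔ f i + f i ≠ 0 := (add_self_eq_zero_iff_of_odd_card hG).not.symm
  simp only [hself]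
  exact ⟨fun h i j => (eq_or_ne i j).elim (fun hij => hij ▸ h.2 i) fun hij => h.1 hij,
    fun h => ⟨fun i j _ => h i j, fun i => h i i⟩⟩

lemma pairwise_add_ne_zero_iff_of_apply_eq_zero {f : ι → G} {m : ι} (hm : f m = 0) :
    (Pairwise fun i j => f i + f j ≠ 0) ↔
      (Pairwise fun i j : {i // i ≠ m} => f i + f j ≠ 0) ∧ ∀ i : {i // i ≠ m}, f i ≠ 0 := by
  constructor
  · exact fun h => ⟨fun i j hij => h (Subtype.coe_ne_coe.2 hij),
      fun i => by simpa [hm] using h i.2⟩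
  · rintro ⟨hpair, hne⟩ i j hij
    by_cases hi : i = m
    · subst hi
      simpa [hm] using hne ⟨j, hij.symm⟩
    by_cases hj : j = m
    · subst hj
      simpa [hm] using hne ⟨i, hij⟩
    exact @hpair ⟨i, hi⟩ ⟨j, hj⟩ fun h => hij (congrArg Subtype.val h)

lemma exists_lt_add_eq_zero_iff {k h : ℕ} (hhk : h ≤ k) {x : Fin k → G} :
    (∃ i j : Fin k, (i : ℕ) < j ∧ (j : ℕ) < h ∧ x i + x j = 0) ↔
      ¬Pairwise fun i j => (x ∘ Fin.castLEEmb hhk) i + (x ∘ Fin.castLEEmb hhk) j ≠ 0 := by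
  simp only [Pairwise, not_forall, not_not, Function.comp_apply, Fin.castLEEmb_apply]
  constructor
  · rintro ⟨i, j, hij, hj, h0⟩
    exact ⟨⟨i, hij.trans hj⟩, ⟨j, hj⟩, fun h => hij.ne (Fin.mk.inj h), h0⟩
  · rintro ⟨i, j, hij, h0⟩
    rcases lt_or_gt_of_ne hij with hlt | hlt
    · exact ⟨i.castLE hhk, j.castLE hhk, hlt, j.2, h0⟩
    · exact ⟨j.castLE hhk, i.castLE hhk, hlt, i.2, add_eq_zero_comm.1 h0⟩

variable [Fintype G]

lemma card_exists_lt_add_eq_zero {k h : ℕ} (hhk : h ≤ k) :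
    Nat.card {x : Fin k → G // ∃ i j : Fin k, (i : ℕ) < j ∧ (j : ℕ) < h ∧ x i + x j = 0} =
      Fintype.card G ^ (k - h) *
        Nat.card {y : Fin h → G // ¬Pairwise fun i j => y i + y j ≠ 0} := by
  simp only [exists_lt_add_eq_zero_iff hhk]
  rw [card_comp_embedding (Fin.castLEEmb hhk) fun y : Fin h → G =>
    ¬Pairwise fun i j => y i + y j ≠ 0, Fintype.card_fin, Fintype.card_fin]

variable [Fintype ι]

lemma card_pairwise_add_ne_zero_and_apply_eq_zero [Nontrivial ι] (hG : Odd (Fintype.card G))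
    (m : ι) :
    Nat.card {f : ι → G // (Pairwise fun i j => f i + f j ≠ 0) ∧ f m = 0} =
      Gamma (Fintype.card G) (Fintype.card ι - 1) := by
  classical
  have hval (g : {i // i ≠ m} → G) (i : {i // i ≠ m}) :
      (Equiv.funSplitAt m G).symm (0, g) i = g i := by simp [i.2]
  let restrict : {f : ι → G // (Pairwise fun i j => f i + f j ≠ 0) ∧ f m = 0} ≃
      {g : {i // i ≠ m} → G // ∀ i j, g i + g j ≠ 0} :=
    { toFun f := ⟨fun i => f.1 i, (pairwise_add_ne_zero_and_forall_ne_zero_iff hG).1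
        ((pairwise_add_ne_zero_iff_of_apply_eq_zero f.2.2).1 f.2.1)⟩
      invFun g := ⟨(Equiv.funSplitAt m G).symm (0, g.1), by
        have hm : (Equiv.funSplitAt m G).symm (0, g.1) m = 0 := by simp
        refine ⟨(pairwise_add_ne_zero_iff_of_apply_eq_zero hm).2
          ((pairwise_add_ne_zero_and_forall_ne_zero_iff hG).2 ?_), hm⟩
        simpa [hval] using g.2⟩
      left_inv f := Subtype.ext ((Equiv.symm_apply_eq _).2 (by ext <;> simp [f.2.2]))
      right_inv g := Subtype.ext (funext (hval g.1)) }
  obtain ⟨j, hj⟩ := exists_ne m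
  have : Nonempty {i // i ≠ m} := ⟨⟨j, hj⟩⟩
  rw [Nat.card_congr restrict, Nat.card_eq_fintype_card, Fintype.card_subtype,
    card_forall_add_ne_zero hG]
  simp

theorem card_pairwise_add_ne_zero [Nontrivial ι] (hG : Odd (Fintype.card G)) :
    Nat.card {f : ι → G // Pairwise fun i j => f i + f j ≠ 0} =
      Gamma (Fintype.card G) (Fintype.card ι) +
        Fintype.card ι * Gamma (Fintype.card G) (Fintype.card ι - 1) := by
  classical
  set P : Finset (ι → G) := {f | Pairwise fun i j => f i + f j ≠ 0} with hP
  have hnonzero : #{f ∈ P | ∀ i, f i ≠ 0} = Gamma (Fintype.card G) (Fintype.card ι) := by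
    rw [hP, filter_filter, ← card_forall_add_ne_zero hG]
    simp only [pairwise_add_ne_zero_and_forall_ne_zero_iff hG]
  have hzero_at (m : ι) : #{f ∈ P | f m = 0} =
      Gamma (Fintype.card G) (Fintype.card ι - 1) := by
    rw [hP, filter_filter, ← card_pairwise_add_ne_zero_and_apply_eq_zero hG m,
      Nat.card_eq_fintype_card, Fintype.card_subtype]
  have hunion : {f ∈ P | ¬∀ i, f i ≠ 0} = univ.biUnion fun m => {f ∈ P | f m = 0} := by
    ext f
    simp
  have hdisj : Set.PairwiseDisjoint (univ : Finset ι) fun m => {f ∈ P | f m = 0} :=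
    fun m _ m' _ hmm' => disjoint_left.2 fun f hf hf' => by
      obtain ⟨hpair, hm⟩ := mem_filter.1 hf
      exact (mem_filter_univ f).1 hpair hmm' (by rw [hm, (mem_filter.1 hf').2, add_zero])
  rw [Nat.card_eq_fintype_card, Fintype.card_subtype, ← hP,
    ← card_filter_add_card_filter_not (fun f : ι → G => ∀ i, f i ≠ 0), hnonzero, hunion,
    card_biUnion hdisj, sum_congr rfl fun m _ => hzero_at m, sum_const, card_univ, smul_eq_mul]

end Pairwise

theorem stmt8_general (G : Type*) [AddGroup G] [Fintype G] (hG : Odd (Fintype.card G))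
    (k h : ℕ) (hh : 2 ≤ h) (hhk : h ≤ k) :
    (Nat.card {x : Fin k → G // x ≠ 0 ∧
        ∃ i j : Fin k, (i : ℕ) < (j : ℕ) ∧ (j : ℕ) < h ∧ x i + x j = 0} : ℤ)
      = (Fintype.card G : ℤ) ^ (k - h) * ((Fintype.card G : ℤ) ^ h - (Gamma (Fintype.card G) h : ℤ)
          - (h : ℤ) * Gamma (Fintype.card G) (h - 1)) - 1 := by
  have : Nontrivial (Fin h) := Fin.nontrivial_iff_two_le.2 hh
  have hzero : ∃ i j : Fin k, (i : ℕ) < j ∧ (j : ℕ) < h ∧ (0 : G) + 0 = 0 :=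
    ⟨⟨0, by omega⟩, ⟨1, by omega⟩, Nat.one_pos, hh, add_zero 0⟩
  have herase := card_ne_and_add_one (a := 0) (P := fun x : Fin k → G =>
    ∃ i j : Fin k, (i : ℕ) < j ∧ (j : ℕ) < h ∧ x i + x j = 0) hzero
  have hcompl := card_not_add_card fun y : Fin h → G => Pairwise fun i j => y i + y j ≠ 0
  rw [card_exists_lt_add_eq_zero hhk, ← Nat.cast_inj (R := ℤ)] at herase
  rw [card_pairwise_add_ne_zero hG, Nat.card_fun, Nat.card_eq_fintype_card (α := G),
    Nat.card_fin, Fintype.card_fin, ← Nat.cast_inj (R := ℤ)] at hcompl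
  push_cast at herase hcompl
  linear_combination herase + (Fintype.card G : ℤ) ^ (k - h) * hcompl

theorem stmt8 (q : ℕ) (hodd : Odd q) (F : Type*) [Field F] [Fintype F]
    (hF : Fintype.card F = q)
    (k h : ℕ) (hh : 3 ≤ h) (hhk : h ≤ k) :
    (Nat.card {x : Fin k → F // x ≠ 0 ∧
        ∃ i j : Fin k, (i : ℕ) < (j : ℕ) ∧ (j : ℕ) < h ∧ x i + x j = 0} : ℤ)
      = (q : ℤ) ^ (k - h) * ((q : ℤ) ^ h - (Gamma q h : ℤ) - (h : ℤ) * Gamma q (h - 1)) - 1 := by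
  subst hF
  exact stmt8_general F hodd k h (by omega) hhk
end

section
/- Let q > 5 be an odd prime power and let 3 ≤ h ≤ k be integers, and let D_3 = { x ∈ 𝔽_q^k \ {0} : x_i = 0 for some 1 ≤ i ≤ h, or x_i + x_j = 0 for some 1 ≤ i < j ≤ h }. Then: (i) for every 1 ≤ i < j ≤ h, the hyperplanes {x : x_i + x_j = 0} and {x : x_i = 0} each contain exactly q^{k−1} − 1 points of D_3; (ii) for every nonzero α ∈ 𝔽_q^k that is not of the form λ(e_i + e_j) for some λ ∈ 𝔽_q^*, 1 ≤ i < j ≤ h, nor of the form λe_i for some λ ∈ 𝔽_q^*, 1 ≤ i ≤ h (e_i denoting the i-th standard basis vector), one has #{ x ∈ D_3 : ⟨α,x⟩ = 0 } < q^{k−1} − 1. Consequently the minimum weight of the code C_{D_3} is attained exactly by the hyperplanes x_i + x_j = 0 and x_i = 0 with 1 ≤ i < j ≤ h. -/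
/-!
Since every point of `D_3` is nonzero, a hyperplane `α ⬝ᵥ x = 0` meets `D_3` in at most
`q ^ (k - 1) - 1` points, with equality iff all its nonzero points lie in `D_3`. This is clear for
the hyperplanes `x i = 0` and `x i + x j = 0` which make up `D_3`, so one has to find a nonzero
point outside `D_3` on any other hyperplane.

If `α` is not a multiple of any `e_i` or `e_i + e_j`, there is even a point none of whose
coordinates (equal or not) sum to zero: its coordinates are `1` except in two or three positions,
where they are `t` or `u`. Two positions suffice unless all nonzero `α i` are equal to some `a`
with `∑ i, α i = 2 * a`; then there are at least three of them, and `t`, `u`, `u` in these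
positions works as soon as `t + 2 * u = 1`. If `α` is a multiple of some other `e_i` or `e_i + e_j`,
take `x i = 0`, respectively `x i = 1` and `x j = -1`, and a suitable constant elsewhere.
-/

open Function Matrix

section SumZeroFree

/-- A set is *sum-zero-free* if no two of its elements, equal or not, have sum zero. A vector whose
coordinates form such a set lies on no hyperplane `x i + x j = 0`, nor, as the case `i = j` shows,
on any hyperplane `x i = 0`. -/
def SumZeroFree {M : Type*} [AddZero M] (T : Set M) : Prop :=
  ∀ a ∈ T, ∀ b ∈ T, a + b ≠ 0

theorem SumZeroFree.mono {M : Type*} [AddZero M] {S T : Set M} (hT : SumZeroFree T)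
    (hST : S ⊆ T) : SumZeroFree S :=
  fun a ha b hb => hT a (hST ha) b (hST hb)

theorem add_self_ne_zero {R : Type*} [NonAssocSemiring R] [NoZeroDivisors R]
    (two_ne : (2 : R) ≠ 0) {a : R} (ha : a ≠ 0) : a + a ≠ 0 := by
  rw [← two_mul]
  exact mul_ne_zero two_ne ha

theorem sumZeroFree_insert_one_pair {R : Type*} [Ring R] [IsDomain R] (two_ne : (2 : R) ≠ 0)
    {t u : R} (ht : t ≠ 0) (ht' : t ≠ -1) (hu : u ≠ 0) (hu' : u ≠ -1) (htu : t + u ≠ 0) :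
    SumZeroFree {1, t, u} := by
  have add_self_ne {a : R} (ha : a ≠ 0) : a + a ≠ 0 := add_self_ne_zero two_ne ha
  have add_one_ne {a : R} (ha : a ≠ -1) : a + 1 ≠ 0 := mt eq_neg_of_add_eq_zero_left ha
  rintro a (rfl | rfl | rfl) b (rfl | rfl | rfl)
  exacts [add_self_ne one_ne_zero, add_comm b 1 ▸ add_one_ne ht', add_comm b 1 ▸ add_one_ne hu',
    add_one_ne ht', add_self_ne ht, htu, add_one_ne hu', add_comm b a ▸ htu, add_self_ne hu]

theorem exists_notMem_of_card_lt {X : Type*} {s : Finset X} (hs : s.card < ENat.card X) :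
    ∃ t, t ∉ s := by
  by_contra! h
  rw [← Set.encard_coe_eq_coe_finsetCard, Set.eq_univ_of_forall h, Set.encard_univ] at hs
  exact hs.false

theorem exists_sumZeroFree_solution {F : Type*} [Field F] (hF : 5 < ENat.card F)
    (two_ne : (2 : F) ≠ 0) {a b c : F} (ha : a ≠ 0) (hb : b ≠ 0) (habc : a ≠ b ∨ c ≠ 0) :
    ∃ t u : F, SumZeroFree {1, t, u} ∧ a * t + b * u + c = 0 := by
  classical
  -- The last three values of `t` are those for which `u = 0`, `u = -1` and `t + u = 0`.
  obtain ⟨t, ht⟩ := exists_notMem_of_card_lt (s := {0, -1, -c / a, (b - c) / a, c / (b - a)})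
    (lt_of_le_of_lt (mod_cast Finset.card_le_five) hF)
  simp only [Finset.mem_insert, Finset.mem_singleton, not_or] at ht
  obtain ⟨ht, ht', hu, hu', htu⟩ := ht
  obtain ⟨u, h⟩ : ∃ u, a * t + b * u + c = 0 := ⟨-(c + a * t) / b, by field_simp; ring⟩
  refine ⟨t, u, sumZeroFree_insert_one_pair two_ne ht ht' ?_ ?_ ?_, h⟩
  · rintro rfl
    exact hu ((eq_div_iff ha).2 (by linear_combination h))
  · rintro rfl
    exact hu' ((eq_div_iff ha).2 (by linear_combination h))
  · intro hsum
    have hc : t * (b - a) = c := by linear_combination b * hsum - h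
    rcases eq_or_ne a b with rfl | hab
    · rw [sub_self, mul_zero] at hc
      exact habc.elim (· rfl) (· hc.symm)
    · exact htu ((eq_div_iff (sub_ne_zero.2 hab.symm)).2 hc)

end SumZeroFree

theorem dotProduct_update {ι R : Type*} [Fintype ι] [DecidableEq ι] [NonUnitalNonAssocRing R]
    (α x : ι → R) (i : ι) (t : R) : α ⬝ᵥ update x i t = α ⬝ᵥ x + α i * (t - x i) := by
  have hupdate : update x i t = x + Pi.single i (t - x i) := by
    ext n
    rcases eq_or_ne n i with rfl | hn
    · simp
    · simp [hn]
  rw [hupdate, dotProduct_add, dotProduct_single]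

section Avoidance

variable {ι : Type*}

theorem exists_ne_zero_avoiding_apply_eq_zero {R : Type*} [NonAssocSemiring R] [Nontrivial ι]
    (two_ne : (2 : R) ≠ 0) {r : ι → ι → Prop} {i : ι} (hi : ¬ r i i) :
    ∃ x : ι → R, x ≠ 0 ∧ (∀ m n, r m n → x m + x n ≠ 0) ∧ x i = 0 := by
  classical
  have : Nontrivial R := ⟨2, 0, two_ne⟩
  obtain ⟨j, hj⟩ := exists_ne i
  refine ⟨update 1 i 0, ne_iff.2 ⟨j, by simp [hj]⟩, fun m n hmn => ?_, update_self ..⟩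
  by_cases hm : m = i <;> by_cases hn : n = i
  · subst hm hn
    exact absurd hmn hi
  all_goals simp [hm, hn, one_add_one_eq_two, two_ne]

theorem exists_ne_zero_avoiding_add_eq_zero {R : Type*} [CommRing R] [IsDomain R]
    (hR : 3 < ENat.card R) (two_ne : (2 : R) ≠ 0) {r : ι → ι → Prop} {i j : ι} (hne : i ≠ j)
    (hij : ¬ r i j) (hji : ¬ r j i) :
    ∃ x : ι → R, x ≠ 0 ∧ (∀ m n, r m n → x m + x n ≠ 0) ∧ x i + x j = 0 := by
  classical
  obtain ⟨t, ht⟩ := exists_notMem_of_card_lt (s := ({0, 1, -1} : Finset R))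
    (lt_of_le_of_lt (mod_cast Finset.card_le_three) hR)
  simp only [Finset.mem_insert, Finset.mem_singleton, not_or] at ht
  obtain ⟨ht, ht_one, ht_neg⟩ := ht
  have htt : t + t ≠ 0 := add_self_ne_zero two_ne ht
  let x : ι → R := update (update (const ι t) i 1) j (-1)
  have hxi : x i = 1 := by simp [x, hne]
  have hxj : x j = -1 := update_self ..
  have hx {n : ι} (hni : n ≠ i) (hnj : n ≠ j) : x n = t := by simp [x, hni, hnj]
  refine ⟨x, ne_iff.2 ⟨i, by simp [hxi]⟩, fun m n hmn => ?_, by rw [hxi, hxj, add_neg_cancel]⟩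
  by_cases hmi : m = i <;> by_cases hmj : m = j <;> by_cases hni : n = i <;> by_cases hnj : n = j
  all_goals grind

variable {F : Type*} [Field F] {α : ι → F}

theorem exists_three_apply_ne_zero [DecidableEq ι] [Nonempty ι] (two_ne : (2 : F) ≠ 0)
    (hα : ∀ (c : F) (i j : ι), α ≠ c • (Pi.single i 1 + Pi.single j 1))
    (hconst : ∀ i j, α i ≠ 0 → α j ≠ 0 → α i = α j) :
    ∃ i j l, i ≠ j ∧ i ≠ l ∧ j ≠ l ∧ α i ≠ 0 ∧ α j ≠ 0 ∧ α l ≠ 0 := by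
  obtain ⟨i, hi⟩ : ∃ i, α i ≠ 0 := by
    by_contra! h
    inhabit ι
    exact hα 0 default default (by ext n; simp [h n])
  obtain ⟨j, hij, hj⟩ : ∃ j, i ≠ j ∧ α j ≠ 0 := by
    by_contra! h
    refine hα (α i / 2) i i (funext fun n => ?_)
    rcases eq_or_ne i n with rfl | hn
    · simp [one_add_one_eq_two, two_ne]
    · simp [hn.symm, h n hn]
  obtain ⟨l, hil, hjl, hl⟩ : ∃ l, i ≠ l ∧ j ≠ l ∧ α l ≠ 0 := by
    by_contra! h
    refine hα (α i) i j (funext fun n => ?_)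
    rcases eq_or_ne i n with rfl | hin
    · simp [hij]
    rcases eq_or_ne j n with rfl | hjn
    · simp [hij.symm, hconst i j hi hj]
    · simp [hin.symm, hjn.symm, h n hin hjn]
  exact ⟨i, j, l, hij, hil, hjl, hi, hj, hl⟩

variable [Fintype ι]

theorem exists_sumZeroFree_dotProduct_eq_zero_of_pair (hF : 5 < ENat.card F)
    (two_ne : (2 : F) ≠ 0) {i j : ι} (hij : i ≠ j) (hi : α i ≠ 0) (hj : α j ≠ 0)
    (h : α i ≠ α j ∨ α ⬝ᵥ 1 ≠ α i + α j) :
    ∃ x : ι → F, SumZeroFree (Set.range x) ∧ α ⬝ᵥ x = 0 := by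
  classical
  obtain ⟨t, u, hfree, htu⟩ :=
    exists_sumZeroFree_solution hF two_ne hi hj (h.imp_right sub_ne_zero.2)
  refine ⟨update (update 1 i t) j u, hfree.mono (Set.range_subset_iff.2 fun n => ?_), ?_⟩
  · simp only [update_apply, Pi.one_apply]
    split_ifs <;> simp
  · simp only [dotProduct_update, update_of_ne hij.symm, Pi.one_apply]
    linear_combination htu

theorem exists_sumZeroFree_dotProduct_eq_zero_of_triple (hF : 5 < ENat.card F)
    (two_ne : (2 : F) ≠ 0) {i j l : ι} (hij : i ≠ j) (hil : i ≠ l) (hjl : j ≠ l)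
    (hαij : α i = α j) (hαil : α i = α l) (h : α ⬝ᵥ 1 = α i + α j) :
    ∃ x : ι → F, SumZeroFree (Set.range x) ∧ α ⬝ᵥ x = 0 := by
  classical
  obtain ⟨t, u, hfree, htu⟩ := exists_sumZeroFree_solution (c := -1) hF two_ne one_ne_zero two_ne
    (.inr (neg_ne_zero.2 one_ne_zero))
  refine ⟨update (update (update 1 i t) j u) l u,
    hfree.mono (Set.range_subset_iff.2 fun n => ?_), ?_⟩
  · simp only [update_apply, Pi.one_apply]
    split_ifs <;> simp
  · simp only [dotProduct_update, update_of_ne hij.symm, update_of_ne hil.symm,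
      update_of_ne hjl.symm, Pi.one_apply, h, ← hαij, ← hαil]
    linear_combination α i * htu

theorem exists_sumZeroFree_dotProduct_eq_zero [DecidableEq ι] [Nonempty ι] (hF : 5 < ENat.card F)
    (two_ne : (2 : F) ≠ 0)
    (hα : ∀ (c : F) (i j : ι), α ≠ c • (Pi.single i 1 + Pi.single j 1)) :
    ∃ x : ι → F, SumZeroFree (Set.range x) ∧ α ⬝ᵥ x = 0 := by
  by_cases hex : ∃ i j, i ≠ j ∧ α i ≠ 0 ∧ α j ≠ 0 ∧ (α i ≠ α j ∨ α ⬝ᵥ 1 ≠ α i + α j)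
  · obtain ⟨i, j, hij, hi, hj, h⟩ := hex
    exact exists_sumZeroFree_dotProduct_eq_zero_of_pair hF two_ne hij hi hj h
  push Not at hex
  obtain ⟨i, j, l, hij, hil, hjl, hi, hj, hl⟩ := exists_three_apply_ne_zero two_ne hα
    fun i j hi hj => (eq_or_ne i j).elim (congrArg α) fun hij => (hex i j hij hi hj).1
  exact exists_sumZeroFree_dotProduct_eq_zero_of_triple hF two_ne hij hil hjl
    (hex i j hij hi hj).1 (hex i l hil hi hl).1 (hex i j hij hi hj).2

theorem exists_ne_zero_avoiding_dotProduct_eq_zero [DecidableEq ι] [Nontrivial ι]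
    (hF : 5 < ENat.card F) (two_ne : (2 : F) ≠ 0) {r : ι → ι → Prop} (hα : α ≠ 0)
    (hr : ∀ (c : F) (i j : ι), c ≠ 0 → r i j → α ≠ c • (Pi.single i 1 + Pi.single j 1)) :
    ∃ x : ι → F, x ≠ 0 ∧ (∀ i j, r i j → x i + x j ≠ 0) ∧ α ⬝ᵥ x = 0 := by
  by_cases hex : ∃ (c : F) (i j : ι), α = c • (Pi.single i 1 + Pi.single j 1)
  · obtain ⟨c, i, j, rfl⟩ := hex
    have hc : c ≠ 0 := left_ne_zero_of_smul hα
    have hij : ¬ r i j := fun h => hr c i j hc h rfl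
    have hji : ¬ r j i := fun h => hr c j i hc h (by rw [add_comm])
    obtain ⟨x, hx0, hx, hxij⟩ :
        ∃ x : ι → F, x ≠ 0 ∧ (∀ m n, r m n → x m + x n ≠ 0) ∧ x i + x j = 0 := by
      rcases eq_or_ne i j with rfl | hne
      · obtain ⟨x, hx0, hx, hxi⟩ := exists_ne_zero_avoiding_apply_eq_zero two_ne hij
        exact ⟨x, hx0, hx, by rw [hxi, add_zero]⟩
      · exact exists_ne_zero_avoiding_add_eq_zero (lt_trans (by norm_num) hF) two_ne hne hij hji
    refine ⟨x, hx0, hx, ?_⟩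
    rw [smul_dotProduct, add_dotProduct, single_one_dotProduct, single_one_dotProduct, hxij,
      smul_zero]
  · push Not at hex
    obtain ⟨x, hfree, hx⟩ := exists_sumZeroFree_dotProduct_eq_zero hF two_ne hex
    have hadd (i j : ι) : x i + x j ≠ 0 := hfree _ ⟨i, rfl⟩ _ ⟨j, rfl⟩
    obtain ⟨i⟩ := ‹Nontrivial ι›.to_nonempty
    exact ⟨x, fun h => hadd i i (by simp [h]), fun i j _ => hadd i j, hx⟩

end Avoidance

section Counting

variable {F ι : Type*} [Field F] [Fintype F] [Fintype ι] {α : ι → F} {D : Set (ι → F)}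

theorem natCard_ne_zero_and_dotProduct_eq_zero (hα : α ≠ 0) :
    Nat.card {x : ι → F // x ≠ 0 ∧ α ⬝ᵥ x = 0} = Fintype.card F ^ (Fintype.card ι - 1) - 1 := by
  classical
  let f : Module.Dual F (ι → F) := dotProductEquiv F ι α
  have hrank : Module.finrank F f.ker = Fintype.card ι - 1 := by
    have hf : f ≠ 0 := (dotProductEquiv F ι).map_ne_zero_iff.2 hα
    have := Module.Dual.finrank_ker_add_one_of_ne_zero hf
    rw [Module.finrank_fintype_fun_eq_card] at this
    exact Nat.eq_sub_of_add_eq this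
  have hker : (f.ker : Set (ι → F)).ncard = Fintype.card F ^ (Fintype.card ι - 1) := by
    rw [← hrank, ← Nat.card_eq_fintype_card]
    exact Module.natCard_eq_pow_finrank
  have hset : {x : ι → F | x ≠ 0 ∧ α ⬝ᵥ x = 0} = (f.ker : Set (ι → F)) \ {0} := by
    ext x
    simp [f, and_comm]
  rw [← hker, ← Set.ncard_sdiff_singleton_of_mem (zero_mem f.ker), ← hset]
  rfl

theorem natCard_mem_and_dotProduct_eq_zero (hα : α ≠ 0)
    (hD : ∀ x, α ⬝ᵥ x = 0 → (x ∈ D ↔ x ≠ 0)) :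
    Nat.card {x : ι → F // x ∈ D ∧ α ⬝ᵥ x = 0} = Fintype.card F ^ (Fintype.card ι - 1) - 1 := by
  rw [← natCard_ne_zero_and_dotProduct_eq_zero hα]
  exact Nat.card_congr (Equiv.subtypeEquivRight fun x => and_congr_left (hD x))

theorem natCard_mem_and_dotProduct_eq_zero_lt (hD : 0 ∉ D) (hα : α ≠ 0) {x : ι → F} (hx0 : x ≠ 0)
    (hxD : x ∉ D) (hx : α ⬝ᵥ x = 0) :
    Nat.card {x : ι → F // x ∈ D ∧ α ⬝ᵥ x = 0} < Fintype.card F ^ (Fintype.card ι - 1) - 1 := by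
  rw [← natCard_ne_zero_and_dotProduct_eq_zero hα]
  refine Set.ncard_lt_ncard (s := {x | x ∈ D ∧ α ⬝ᵥ x = 0}) ⟨fun y hy => ⟨?_, hy.2⟩, fun hsub => ?_⟩
  · exact ne_of_mem_of_not_mem hy.1 hD
  · exact hxD (hsub ⟨hx0, hx⟩).1

end Counting

theorem two_ne_zero_of_odd_card {F : Type*} [Field F] [Fintype F] (h : Odd (Fintype.card F)) :
    (2 : F) ≠ 0 :=
  Ring.two_ne_zero fun h2 =>
    Nat.not_even_iff_odd.2 h (Nat.even_iff.2 (FiniteField.even_card_of_char_two h2))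

/-- The nonzero vectors lying on one of the hyperplanes `x i = 0` with `i ∈ S` or `x i + x j = 0`
with `r i j`. The set `D_3` is the case `S = {i | i < h}`, `r i j ↔ i < j ∧ j < h`. -/
def arrangementPoints (F : Type*) [Field F] {ι : Type*} (S : Set ι) (r : ι → ι → Prop) :
    Set (ι → F) :=
  {x | x ≠ 0 ∧ ((∃ i ∈ S, x i = 0) ∨ ∃ i j, r i j ∧ x i + x j = 0)}

theorem exists_ne_zero_notMem_arrangementPoints {F ι : Type*} [Field F] [Fintype ι]
    [DecidableEq ι] [Nontrivial ι] (hF : 5 < ENat.card F) (two_ne : (2 : F) ≠ 0)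
    {S : Set ι} {r : ι → ι → Prop} {α : ι → F} (hα : α ≠ 0)
    (hpair : ¬ ∃ (c : F) (i j : ι), c ≠ 0 ∧ r i j ∧ α = c • (Pi.single i 1 + Pi.single j 1))
    (hsingle : ¬ ∃ (c : F) (i : ι), c ≠ 0 ∧ i ∈ S ∧ α = c • Pi.single i 1) :
    ∃ x : ι → F, x ≠ 0 ∧ x ∉ arrangementPoints F S r ∧ α ⬝ᵥ x = 0 := by
  obtain ⟨x, hx0, havoid, hx⟩ := exists_ne_zero_avoiding_dotProduct_eq_zero hF two_ne
    (r := fun i j => r i j ∨ i = j ∧ i ∈ S) hα (by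
      rintro c i j hc (hij | ⟨rfl, hi⟩) h
      · exact hpair ⟨c, i, j, hc, hij, h⟩
      · exact hsingle ⟨c * 2, i, mul_ne_zero hc two_ne, hi, by rw [h, ← two_smul F, smul_smul]⟩)
  refine ⟨x, hx0, ?_, hx⟩
  rintro ⟨-, ⟨i, hi, hxi⟩ | ⟨i, j, hij, hxij⟩⟩
  · exact havoid i i (.inr ⟨rfl, hi⟩) (by rw [hxi, add_zero])
  · exact havoid i j (.inl hij) hxij

theorem stmt13_general {F ι : Type*} [Field F] [Fintype F] [Fintype ι] [DecidableEq ι]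
    [Nontrivial ι] (hF : 5 < Fintype.card F) (hodd : Odd (Fintype.card F)) (S : Set ι)
    (r : ι → ι → Prop) :
    (∀ i j, r i j → Nat.card {x : ι → F // x ∈ arrangementPoints F S r ∧ x i + x j = 0} =
      Fintype.card F ^ (Fintype.card ι - 1) - 1) ∧
    (∀ i ∈ S, Nat.card {x : ι → F // x ∈ arrangementPoints F S r ∧ x i = 0} =
      Fintype.card F ^ (Fintype.card ι - 1) - 1) ∧
    (∀ α : ι → F, α ≠ 0 →
      (¬ ∃ (c : F) (i j : ι), c ≠ 0 ∧ r i j ∧ α = c • (Pi.single i 1 + Pi.single j 1)) →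
      (¬ ∃ (c : F) (i : ι), c ≠ 0 ∧ i ∈ S ∧ α = c • Pi.single i 1) →
      Nat.card {x : ι → F // x ∈ arrangementPoints F S r ∧ α ⬝ᵥ x = 0} <
        Fintype.card F ^ (Fintype.card ι - 1) - 1) := by
  have two_ne : (2 : F) ≠ 0 := two_ne_zero_of_odd_card hodd
  refine ⟨fun i j hij => ?_, fun i hi => ?_, fun α hα hpair hsingle => ?_⟩
  · have hα : (Pi.single i 1 + Pi.single j 1 : ι → F) ≠ 0 := ne_iff.2 ⟨i, by
      rcases eq_or_ne i j with rfl | hne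
      · simpa [one_add_one_eq_two] using two_ne
      · simp [hne]⟩
    have hdot (x : ι → F) : (Pi.single i 1 + Pi.single j 1) ⬝ᵥ x = x i + x j := by
      rw [add_dotProduct, single_one_dotProduct, single_one_dotProduct]
    simp only [← hdot]
    exact natCard_mem_and_dotProduct_eq_zero hα fun x hx =>
      and_iff_left (.inr ⟨i, j, hij, hdot x ▸ hx⟩)
  · have hα : (Pi.single i 1 : ι → F) ≠ 0 := Pi.single_ne_zero_iff.2 one_ne_zero
    simp only [← single_one_dotProduct i]
    exact natCard_mem_and_dotProduct_eq_zero hα fun x hx =>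
      and_iff_left (.inl ⟨i, hi, single_one_dotProduct i x ▸ hx⟩)
  · obtain ⟨x, hx0, hxD, hx⟩ := exists_ne_zero_notMem_arrangementPoints
      (by rw [ENat.card_eq_coe_fintype_card]; exact_mod_cast hF) two_ne hα hpair hsingle
    exact natCard_mem_and_dotProduct_eq_zero_lt (fun h => h.1 rfl) hα hx0 hxD hx

theorem stmt13 (q : ℕ) (hq : 5 < q) (hodd : Odd q) (F : Type*) [Field F] [Fintype F]
    (hF : Fintype.card F = q)
    (k h : ℕ) (hh : 3 ≤ h) (hhk : h ≤ k)
    (D3 : Set (Fin k → F))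
    (hD3 : D3 = {x | x ≠ 0 ∧
      ((∃ i : Fin k, (i : ℕ) < h ∧ x i = 0) ∨
        ∃ i j : Fin k, (i : ℕ) < (j : ℕ) ∧ (j : ℕ) < h ∧ x i + x j = 0)}) :
    -- (i)
    (∀ i j : Fin k, (i : ℕ) < (j : ℕ) → (j : ℕ) < h →
      Nat.card {x : Fin k → F // x ∈ D3 ∧ x i + x j = 0} = q ^ (k - 1) - 1)
    ∧
    (∀ i : Fin k, (i : ℕ) < h →
      Nat.card {x : Fin k → F // x ∈ D3 ∧ x i = 0} = q ^ (k - 1) - 1)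
    ∧
    -- (ii)
    (∀ α : Fin k → F, α ≠ 0 →
      (¬ ∃ (lam : F) (i j : Fin k), lam ≠ 0 ∧ (i : ℕ) < (j : ℕ) ∧ (j : ℕ) < h ∧
          α = lam • (Pi.single i (1 : F) + Pi.single j (1 : F))) →
      (¬ ∃ (lam : F) (i : Fin k), lam ≠ 0 ∧ (i : ℕ) < h ∧ α = lam • (Pi.single i (1 : F) : Fin k → F)) →
      Nat.card {x : Fin k → F // x ∈ D3 ∧ ∑ m, α m * x m = 0} < q ^ (k - 1) - 1) := by
  subst hF hD3
  have : Nontrivial (Fin k) := Fin.nontrivial_iff_two_le.2 (by omega)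
  simpa only [arrangementPoints, dotProduct, Fintype.card_fin, Set.mem_ofPred_eq, and_assoc,
    and_imp] using
    stmt13_general hq hodd {i : Fin k | (i : ℕ) < h} fun i j => (i : ℕ) < j ∧ (j : ℕ) < h
end
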